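/- Let d ≥ 2 and let n_0, h, t be positive integers with gcd(n_0,t) = 1 such that the generalized arithmetic sequence n_0 and n_i = h·n_0 + i·t for i = 1,…,d is a minimal system of generators of the numerical semigroup S. Then S is homogeneous, i.e. every element of AP(S,n_0) has all its factorizations of the same length; moreover ord_S(h·n_0·⌈r/d⌉ + t·r) = ⌈r/d⌉ for every integer 0 ≤ r < n_0. -/

import Mathlib

open scoped BigOperators

/-- The value `Σ aᵢ nᵢ` of a tuple of coefficients `a` w.r.t. the generators `n`. -/
def sval {d : ℕ} (n : Fin d → ℕ) (a : Fin d → ℕ) : ℕ := ∑ i, a i * n i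

/-- The total length `Σ aᵢ` of a factorization. -/
def tlen {d : ℕ} (a : Fin d → ℕ) : ℕ := ∑ i, a i

/-- The submonoid of `ℕ` generated by `n`. -/
def gen {d : ℕ} (n : Fin d → ℕ) : Set ℕ := {s : ℕ | ∃ a : Fin d → ℕ, s = sval n a}

/-- The Apéry set of the semigroup generated by `n` with respect to `s`:
elements `x` of the semigroup such that `x - s` is not in the semigroup. -/
def Apery {d : ℕ} (n : Fin d → ℕ) (s : ℕ) : Set ℕ :=
  {x : ℕ | x ∈ gen n ∧ ¬ ∃ y ∈ gen n, x = s + y}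

/-- A subset `T` is homogeneous if every nonzero element of `T` has all its
factorizations of the same length. -/
def HomogSet {d : ℕ} (n : Fin d → ℕ) (T : Set ℕ) : Prop :=
  ∀ t ∈ T, t ≠ 0 → ∀ a b : Fin d → ℕ, sval n a = t → sval n b = t → tlen a = tlen b

/-- The order of `s`: the maximal length of a factorization of `s`. -/
noncomputable def ordS {d : ℕ} (n : Fin d → ℕ) (s : ℕ) : ℕ :=
  sSup {l : ℕ | ∃ a : Fin d → ℕ, sval n a = s ∧ tlen a = l}

/-- The torsion set of the semigroup generated by `n`, with respect to the
generator of index `i0` (the smallest generator). -/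
noncomputable def Torsion {d : ℕ} (n : Fin d → ℕ) (i0 : Fin d) : Set ℕ :=
  {s : ℕ | s ∈ gen n ∧ ∃ c : ℕ, 0 < c ∧ ordS n s + c < ordS n (s + c * n i0)}

/-- `n` is a minimal system of generators: any expression of a generator as a
nonnegative combination of the generators has total coefficient sum one. -/
def MinGen {d : ℕ} (n : Fin d → ℕ) : Prop :=
  ∀ r : Fin d, ∀ a : Fin d → ℕ, n r = sval n a → tlen a = 1

/-- `n` generates a numerical semigroup (cofinite in `ℕ`). -/
def IsNumerical {d : ℕ} (n : Fin d → ℕ) : Prop := {x : ℕ | x ∉ gen n}.Finite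

/-- The monomial `x^a = Π xᵢ^{aᵢ}`. -/
noncomputable def monom (k : Type*) [CommRing k] {d : ℕ} (a : Fin d → ℕ) :
    MvPolynomial (Fin d) k :=
  ∏ i, (MvPolynomial.X i : MvPolynomial (Fin d) k) ^ a i

/-- The toric ideal `I_S`: kernel of `k[x₁,…,x_d] → k[t]`, `xᵢ ↦ t^{nᵢ}`. -/
noncomputable def toricIdeal (k : Type*) [CommRing k] {d : ℕ} (n : Fin d → ℕ) :
    Ideal (MvPolynomial (Fin d) k) :=
  RingHom.ker (MvPolynomial.aeval (R := k)
    (fun i => (Polynomial.X : Polynomial k) ^ n i)).toRingHom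

/-- `E` is a minimal generating set of the ideal `I`: it spans `I` and no
proper subset spans `I`. -/
def IsMinGenSet {R : Type*} [CommRing R] (I : Ideal R) (E : Set R) : Prop :=
  Ideal.span E = I ∧ ∀ E' : Set R, E' ⊂ E → Ideal.span E' ≠ I

/-- Membership of an integer in the semigroup generated by `n`. -/
def memZ {d : ℕ} (n : Fin d → ℕ) (z : ℤ) : Prop := ∃ x ∈ gen n, (x : ℤ) = z

/-- A numerical semigroup with Frobenius number `F = max (ℤ ∖ S)` is symmetric
if for every integer `z`, `z ∈ S ↔ F - z ∉ S`. -/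
def IsSymmetric {d : ℕ} (n : Fin d → ℕ) : Prop :=
  ∃ F : ℤ, ¬ memZ n F ∧ (∀ z : ℤ, F < z → memZ n z) ∧
    ∀ z : ℤ, memZ n z ↔ ¬ memZ n (F - z)

/-- A numerical semigroup with Frobenius number `F = max (ℤ ∖ S)` is
pseudo-symmetric if `F` is even and for every integer `z`,
`z ∈ S ↔ (z ≠ F/2 ∧ F - z ∉ S)`. -/
def IsPseudoSymmetric {d : ℕ} (n : Fin d → ℕ) : Prop :=
  ∃ F : ℤ, ¬ memZ n F ∧ (∀ z : ℤ, F < z → memZ n z) ∧ F % 2 = 0 ∧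
    ∀ z : ℤ, memZ n z ↔ (z ≠ F / 2 ∧ ¬ memZ n (F - z))

/-- The generators `q·m₁,…,q·m_d, p·n₁,…,p·n_e` of the gluing of two numerical
semigroups. -/
def glueGen {d e : ℕ} (mg : Fin d → ℕ) (ng : Fin e → ℕ) (p q : ℕ) :
    Fin (d + e) → ℕ :=
  Fin.append (fun i => q * mg i) (fun i => p * ng i)
/-- The generalized arithmetic sequence. -/
abbrev gseq (d n0 h t : ℕ) : Fin (d + 1) → ℕ :=
  fun i => if (i : ℕ) = 0 then n0 else h * n0 + (i : ℕ) * t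

theorem sval_add' {d : ℕ} (n a b : Fin d → ℕ) : sval n (a + b) = sval n a + sval n b := by
  simp [sval, add_mul, Finset.sum_add_distrib]

theorem tlen_add' {d : ℕ} (a b : Fin d → ℕ) : tlen (a + b) = tlen a + tlen b := by
  simp [tlen, Finset.sum_add_distrib]

theorem sval_single' {d : ℕ} (n : Fin d → ℕ) (i : Fin d) (k : ℕ) :
    sval n (Pi.single i k) = k * n i := by
  unfold sval
  rw [Finset.sum_eq_single i]
  · simp
  · intro j _ hj; simp [hj]
  · simp

theorem tlen_single' {d : ℕ} (i : Fin d) (k : ℕ) : tlen (Pi.single i k) = k := by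
  simp [tlen]

theorem fact_data (d n0 h t : ℕ) (a : Fin (d + 1) → ℕ) :
    ∃ m w : ℕ, w ≤ d * m ∧ tlen a = a 0 + m ∧
      sval (gseq d n0 h t) a = a 0 * n0 + m * (h * n0) + w * t := by
  refine ⟨∑ i : Fin d, a i.succ, ∑ i : Fin d, a i.succ * ((i : ℕ) + 1), ?_, ?_, ?_⟩
  · rw [Finset.mul_sum]
    apply Finset.sum_le_sum
    intro i _
    rw [mul_comm]
    exact Nat.mul_le_mul_right _ i.2
  · simp [tlen, Fin.sum_univ_succ]
  · simp only [sval, gseq, Fin.sum_univ_succ]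
    simp only [Fin.val_zero, if_true, Fin.val_succ, Nat.succ_ne_zero, if_false, mul_add,
      Finset.sum_add_distrib, Finset.sum_mul, add_assoc]
    congr 2
    rw [← Finset.sum_add_distrib, Finset.sum_mul]
    apply Finset.sum_congr rfl
    intro i _
    ring

theorem ceil_le {d r m : ℕ} (hd : 0 < d) (hr : r ≤ d * m) : (r + d - 1) / d ≤ m := by
  rw [← Nat.lt_succ_iff, Nat.div_lt_iff_lt_mul hd]
  have : m.succ * d = d * m + d := by rw [Nat.succ_mul, mul_comm]
  omega

theorem exists_fact (d n0 h t r : ℕ) (hd : 2 ≤ d) :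
    ∃ a : Fin (d + 1) → ℕ, tlen a = (r + d - 1) / d ∧
      sval (gseq d n0 h t) a = h * n0 * ((r + d - 1) / d) + t * r := by
  have hdpos : 0 < d := by omega
  have hqs : d * (r / d) + r % d = r := Nat.div_add_mod r d
  have hs : r % d < d := Nat.mod_lt _ hdpos
  generalize r / d = q at hqs
  generalize r % d = s at hqs hs
  have hlast : sval (gseq d n0 h t) (Pi.single (Fin.last d) q) = q * (h * n0 + d * t) := by
    rw [sval_single']
    simp [gseq, hdpos.ne']
  rcases Nat.eq_zero_or_pos s with h0 | h0
  · have hc : (r + d - 1) / d = q := by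
      rw [← hqs, h0]
      have : d * q + 0 + d - 1 = (d - 1) + d * q := by omega
      rw [this, Nat.add_mul_div_left _ _ hdpos, Nat.div_eq_of_lt (by omega), zero_add]
    refine ⟨Pi.single (Fin.last d) q, ?_, ?_⟩
    · rw [tlen_single', hc]
    · rw [hlast, hc, ← hqs, h0]; ring
  · have hc : (r + d - 1) / d = q + 1 := by
      rw [← hqs]
      have : d * q + s + d - 1 = (s - 1) + d * (q + 1) := by rw [mul_add]; omega
      rw [this, Nat.add_mul_div_left _ _ hdpos, Nat.div_eq_of_lt (by omega), zero_add]
    refine ⟨Pi.single (Fin.last d) q + Pi.single ⟨s, by omega⟩ 1, ?_, ?_⟩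
    · rw [tlen_add', tlen_single', tlen_single', hc]
    · rw [sval_add', hlast, sval_single', hc, ← hqs]
      simp only [gseq, h0.ne', if_false]
      ring

theorem len_unique (d n0 h t r : ℕ) (hd : 2 ≤ d) (hn0 : 0 < n0) (hh : 0 < h)
    (hcop : Nat.Coprime n0 t) (hr : r < n0) (a : Fin (d + 1) → ℕ)
    (ha : sval (gseq d n0 h t) a = h * n0 * ((r + d - 1) / d) + t * r) :
    tlen a = (r + d - 1) / d := by
  obtain ⟨m, w, hw, hl, hv⟩ := fact_data d n0 h t a
  rw [hv] at ha
  have hmod : w * t ≡ r * t [MOD n0] := by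
    have h1 : (a 0 + m * h) * n0 + w * t = (h * ((r + d - 1) / d)) * n0 + r * t := by
      linarith [ha]
    have h2 : ((a 0 + m * h) * n0 + w * t) % n0 = ((h * ((r + d - 1) / d)) * n0 + r * t) % n0 := by
      rw [h1]
    simpa [Nat.ModEq] using h2
  have hmod' : w ≡ r [MOD n0] := Nat.ModEq.cancel_right_of_coprime hcop hmod
  have hwr : w % n0 = r := by rw [hmod', Nat.mod_eq_of_lt hr]
  have hle : r ≤ w := hwr ▸ Nat.mod_le _ _
  have hc : (r + d - 1) / d ≤ m := ceil_le (by omega) (hle.trans hw)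
  generalize (r + d - 1) / d = c at *
  obtain ⟨e, rfl⟩ := Nat.exists_eq_add_of_le hc
  have hwt : t * r ≤ w * t := by rw [mul_comm]; exact Nat.mul_le_mul_right _ hle
  have h3 : (a 0) * n0 + e * (h * n0) = 0 := by
    have h9 : a 0 * n0 + e * (h * n0) + w * t = t * r := by linarith [ha]
    omega
  have h4 : 0 < h * n0 := Nat.mul_pos hh hn0
  have h5 : a 0 * n0 = 0 := by omega
  have h6 : e * (h * n0) = 0 := by omega
  have h7 : a 0 = 0 := by rcases Nat.mul_eq_zero.1 h5 with h | h <;> omega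
  have h8 : e = 0 := by rcases Nat.mul_eq_zero.1 h6 with h | h <;> omega
  omega

theorem apery_form (d n0 h t : ℕ) (hd : 2 ≤ d) (hn0 : 0 < n0) (x : ℕ)
    (hx : x ∈ Apery (gseq d n0 h t) n0) :
    ∃ r < n0, x = h * n0 * ((r + d - 1) / d) + t * r := by
  obtain ⟨⟨a, rfl⟩, hnot⟩ := hx
  obtain ⟨m, w, hw, hl, hv⟩ := fact_data d n0 h t a
  have hwd := Nat.mod_add_div w n0
  refine ⟨w % n0, Nat.mod_lt _ hn0, ?_⟩
  obtain ⟨b, hbl, hb⟩ := exists_fact d n0 h t (w % n0) hd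
  have hc : (w % n0 + d - 1) / d ≤ m := ceil_le (by omega) ((Nat.mod_le _ _).trans hw)
  generalize w % n0 = r at *
  generalize w / n0 = k at *
  generalize (r + d - 1) / d = c at *
  obtain ⟨e, rfl⟩ := Nat.exists_eq_add_of_le hc
  have key : sval (gseq d n0 h t) a = sval (gseq d n0 h t) b + (a 0 + e * h + k * t) * n0 := by
    rw [hv, hb, ← hwd]; ring
  rw [← hb, key]
  rcases Nat.eq_zero_or_pos (a 0 + e * h + k * t) with h0 | h0
  · rw [h0]; simp
  · exfalso
    apply hnot
    obtain ⟨j, hj⟩ := Nat.exists_eq_add_of_le' h0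
    refine ⟨_, ⟨b + Pi.single 0 j, rfl⟩, ?_⟩
    rw [key, sval_add', sval_single', hj]
    simp only [gseq, Fin.val_zero, if_true]
    ring

/-- a numerical semigroup generated by a generalized arithmetic
sequence `n₀, h·n₀ + i·t (i = 1,…,d)` is homogeneous, and
`ord_S(h·n₀·⌈r/d⌉ + t·r) = ⌈r/d⌉` for `0 ≤ r < n₀`. -/
theorem statement4 (d n0 h t : ℕ) (hd : 2 ≤ d) (hn0 : 0 < n0) (hh : 0 < h)
    (ht : 0 < t) (hcop : Nat.Coprime n0 t)
    (hmin : MinGen (fun i : Fin (d + 1) =>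
      if (i : ℕ) = 0 then n0 else h * n0 + (i : ℕ) * t)) :
    HomogSet (fun i : Fin (d + 1) =>
        if (i : ℕ) = 0 then n0 else h * n0 + (i : ℕ) * t)
      (Apery (fun i : Fin (d + 1) =>
        if (i : ℕ) = 0 then n0 else h * n0 + (i : ℕ) * t) n0) ∧
    ∀ r : ℕ, r < n0 →
      ordS (fun i : Fin (d + 1) =>
          if (i : ℕ) = 0 then n0 else h * n0 + (i : ℕ) * t)
        (h * n0 * ((r + d - 1) / d) + t * r) = (r + d - 1) / d := by
  change HomogSet (gseq d n0 h t) (Apery (gseq d n0 h t) n0) ∧ ∀ r : ℕ, r < n0 →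
    ordS (gseq d n0 h t) (h * n0 * ((r + d - 1) / d) + t * r) = (r + d - 1) / d
  refine ⟨?_, ?_⟩
  · intro x hx _ a b ha hb
    obtain ⟨r, hr, rfl⟩ := apery_form d n0 h t hd hn0 x hx
    rw [len_unique d n0 h t r hd hn0 hh hcop hr a ha,
      len_unique d n0 h t r hd hn0 hh hcop hr b hb]
  · intro r hr
    obtain ⟨a, hal, ha⟩ := exists_fact d n0 h t r hd
    have : {l : ℕ | ∃ a : Fin (d + 1) → ℕ, sval (gseq d n0 h t) a =
        h * n0 * ((r + d - 1) / d) + t * r ∧ tlen a = l} = {(r + d - 1) / d} := by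
      ext l
      constructor
      · rintro ⟨b, hb, rfl⟩
        exact len_unique d n0 h t r hd hn0 hh hcop hr b hb
      · rintro rfl
        exact ⟨a, ha, hal⟩
    unfold ordS
    rw [this, csSup_singleton]
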